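/- Let λ be a partition of n and k ≥ 1. For T ∈ SYT(λ) and σ⃗ = (σ^1,…,σ^{k−1}) ∈ S_n^{k−1}, with R = des(T), σ^k = ε, and Z^k = Z_{R,σ^k}(Z_{R,σ^{k−1}}(⋯(Z_{R,σ^1}(∅))⋯)) = (z^1,…,z^n) ∈ (ℕ^k)^n (∅ the list of n empty sequences), let P_{T,σ⃗} be the filling of the Young diagram of λ obtained from T by replacing each entry i by the sequence z^i, and let 𝒯^k_λ = { P_{T,σ⃗} : T ∈ SYT(λ), σ⃗ ∈ S_n^{k−1} }. Then, as formal power series in q_1,…,q_k: (Π_{i=1}^k (q_i;q_i)_n) · Σ_{T ∈ SYT(λ)} Σ_{S ∈ (ℕ^k)^n with σ_{des(T)}(S) = ε} q^S = Σ_{P ∈ 𝒯^k_λ} q^P, where for P = P_{T,σ⃗} with entry list (z^1,…,z^n) we set q^P = q^{(z^1,…,z^n)} and the right-hand sum runs over the distinct elements of the set 𝒯^k_λ. -/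

import Mathlib

open scoped Classical

namespace RomeroComaj

noncomputable section

/-- `Seq r` is `ℕ^r`, the type of sequences of natural numbers of length `r`. -/
abbrev Seq (r : ℕ) := Fin r → ℕ

/-- strict lexicographic order on `ℕ^r`. -/
def lexLt {r : ℕ} (a b : Seq r) : Prop :=
  ∃ i : Fin r, (∀ j : Fin r, j < i → a j = b j) ∧ a i < b i

/-- weak lexicographic order on `ℕ^r`. -/
def lexLe {r : ℕ} (a b : Seq r) : Prop :=
  lexLt a b ∨ a = b

/-- `RNbr R a b` : the (1-indexed) indices `a` and `b` are `R`-neighbors,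
i.e. (for `a < b`) all of `a, a+1, …, b-1` lie in `R`. -/
def RNbr (R : Finset ℕ) (a b : ℕ) : Prop :=
  ∀ t ∈ Finset.Ico (min a b) (max a b), t ∈ R

/-- the value `σ_i` of the one-line notation of `σ`, both position `i` and
the value being 1-indexed (junk value `0` outside `1 ≤ i ≤ n`). -/
def pget {n : ℕ} (σ : Equiv.Perm (Fin n)) (i : ℕ) : ℕ :=
  if h : i - 1 < n then (σ ⟨i - 1, h⟩).val + 1 else 0

/-- the sequence `s^i` of a list `S = (s^1, …, s^n)`, `i` being 1-indexed. -/
def sget {n r : ℕ} (S : Fin n → Seq r) (i : ℕ) : Seq r :=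
  if h : i - 1 < n then S ⟨i - 1, h⟩ else 0

/-- the condition for `i` to belong to `Des_{R,S}(σ)`:
`s^{σ_i} > s^{σ_{i+1}} − χ(σ_{i+1} < σ_i ∧ σ_{i+1} ≁_R σ_i) − χ(σ_{i+1} > σ_i ∧ σ_i ∼_R σ_{i+1})`. -/
def desCond {n r : ℕ} (R : Finset ℕ) (S : Fin n → Seq r) (σ : Equiv.Perm (Fin n)) (i : ℕ) :
    Prop :=
  if (pget σ (i+1) < pget σ i ∧ ¬ RNbr R (pget σ (i+1)) (pget σ i)) ∨
      (pget σ i < pget σ (i+1) ∧ RNbr R (pget σ i) (pget σ (i+1)))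
  then lexLe (sget S (pget σ (i+1))) (sget S (pget σ i))
  else lexLt (sget S (pget σ (i+1))) (sget S (pget σ i))

/-- `Des_{R,S}(σ) ⊆ {1, …, n−1}` (1-indexed positions). -/
def DesSet {n r : ℕ} (R : Finset ℕ) (S : Fin n → Seq r) (σ : Equiv.Perm (Fin n)) : Finset ℕ :=
  (Finset.Icc 1 (n-1)).filter (fun i => desCond R S σ i)

/-- `Comaj_{R,S}(σ) = ∑_{i ∈ Des_{R,S}(σ)} (n − i)`. -/
def Comaj {n r : ℕ} (R : Finset ℕ) (S : Fin n → Seq r) (σ : Equiv.Perm (Fin n)) : ℕ :=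
  ∑ i ∈ DesSet R S σ, (n - i)

/-- `s^i` is read before `s^j` in the reading order of `S` (with respect to `R`);
`i, j` are 1-indexed. -/
def readBefore {n r : ℕ} (R : Finset ℕ) (S : Fin n → Seq r) (i j : ℕ) : Prop :=
  lexLt (sget S i) (sget S j) ∨
    (sget S i = sget S j ∧ ((i < j ∧ ¬ RNbr R i j) ∨ (j < i ∧ RNbr R j i)))

/-- `IsReading R S σ` says that the reading permutation `σ_R(S)` equals `σ`,
i.e. `σ` lists `1, …, n` in the reading order of `S`. -/
def IsReading {n r : ℕ} (R : Finset ℕ) (S : Fin n → Seq r) (σ : Equiv.Perm (Fin n)) : Prop :=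
  ∀ i ∈ Finset.Icc 1 (n-1), readBefore R S (pget σ i) (pget σ (i+1))

/-- the operator `Z_{R,σ} : (ℕ^r)^n → (ℕ^{r+1})^n`, prepending to `s^v` the number of
descents of `σ` (w.r.t. `R, S`) at positions strictly before the position of `v` in `σ`. -/
def Zop {n r : ℕ} (R : Finset ℕ) (σ : Equiv.Perm (Fin n)) (S : Fin n → Seq r) :
    Fin n → Seq (r+1) :=
  fun v => Fin.cons ((DesSet R S σ ∩ Finset.Ico 1 ((σ.symm v).val + 1)).card) (S v)

/-- `Zvec R σs i = Z_{R,σ^i} ⋯ Z_{R,σ^1}(∅)` where `σ^{j+1} = σs j`. -/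
def Zvec {n : ℕ} (R : Finset ℕ) (σs : ℕ → Equiv.Perm (Fin n)) : (i : ℕ) → Fin n → Seq i
  | 0 => fun _ => (0 : Seq 0)
  | (i+1) => Zop R (σs i) (Zvec R σs i)

/-- extend a finite vector of permutations to `ℕ`, by the identity. -/
def extFun {n r : ℕ} (σv : Fin r → Equiv.Perm (Fin n)) : ℕ → Equiv.Perm (Fin n) :=
  fun j => if h : j < r then σv ⟨j, h⟩ else 1

/-- `comajI R k σv i = comaj^i_R(σ⃗)` for `1 ≤ i ≤ k`, where `σ⃗ = σv` has length `k−1`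
and `σ^k = ε`. -/
def comajI {n : ℕ} (R : Finset ℕ) (k : ℕ) (σv : Fin (k-1) → Equiv.Perm (Fin n)) (i : ℕ) : ℕ :=
  Comaj R (Zvec R (extFun σv) (i-1)) (extFun σv (i-1))

/-- the exponent of the monomial `q^S` for `S ∈ (ℕ^r)^n` : the (0-indexed) variable `i`
(that is, `q_{i+1}`) records the `(r−i)`-th (0-indexed: `r−1−i`-th) coordinates. -/
def expOf {n r : ℕ} (S : Fin n → Seq r) : Fin r →₀ ℕ :=
  Finsupp.equivFunOnFinite.symm (fun i => ∑ j : Fin n, S j (Fin.rev i))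

/-- the formal power series whose coefficient at a monomial `d` counts the elements
`a : α` satisfying `P a d`. -/
def countSeriesP {σty α : Type*} (P : α → (σty →₀ ℕ) → Prop) : MvPowerSeries σty ℤ :=
  fun d => (Nat.card {a : α // P a d} : ℤ)

/-- `∑_{S ∈ (ℕ^r)^n, P S} q^S`. -/
def countSeries {n r : ℕ} (P : (Fin n → Seq r) → Prop) : MvPowerSeries (Fin r) ℤ :=
  countSeriesP (fun S d => P S ∧ expOf S = d)

/-- the Pochhammer factor `(q_i; q_i)_n = ∏_{j=1}^n (1 − q_i^j)`. -/
def pochOne {r : ℕ} (n : ℕ) (i : Fin r) : MvPowerSeries (Fin r) ℤ :=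
  ∏ j ∈ Finset.Icc 1 n, (1 - (MvPowerSeries.X i : MvPowerSeries (Fin r) ℤ) ^ j)

/-- `∏_{i=1}^{r} (q_i; q_i)_n`. -/
def pochAll (n r : ℕ) : MvPowerSeries (Fin r) ℤ :=
  ∏ i : Fin r, pochOne n i

/-- the exponent of `q_1^{comaj¹_R(σ⃗)} ⋯ q_k^{comaj^k_R(σ⃗)}`. -/
def comajExp {n : ℕ} (R : Finset ℕ) (k : ℕ) (σv : Fin (k-1) → Equiv.Perm (Fin n)) :
    Fin k →₀ ℕ :=
  Finsupp.equivFunOnFinite.symm (fun i => comajI R k σv (i.val + 1))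

/-- A standard Young tableau of shape `μ` (with `μ.card` cells), recorded by the
position `pos i` of each (1-indexed) entry `i ∈ {1, …, μ.card}`; entries increase
left-to-right along rows and down columns (matrix convention), and `pos` is a
bijection from `{1, …, μ.card}` onto the cells of `μ` (normalized by `0` outside). -/
structure SYT (μ : YoungDiagram) where
  pos : ℕ → ℕ × ℕ
  mem : ∀ i ∈ Finset.Icc 1 μ.card, pos i ∈ μ
  inj : ∀ i ∈ Finset.Icc 1 μ.card, ∀ j ∈ Finset.Icc 1 μ.card, pos i = pos j → i = j
  surj : ∀ c ∈ μ, ∃ i ∈ Finset.Icc 1 μ.card, pos i = c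
  row_inc : ∀ i ∈ Finset.Icc 1 μ.card, ∀ j ∈ Finset.Icc 1 μ.card,
    (pos i).1 = (pos j).1 → (pos i).2 < (pos j).2 → i < j
  col_inc : ∀ i ∈ Finset.Icc 1 μ.card, ∀ j ∈ Finset.Icc 1 μ.card,
    (pos i).2 = (pos j).2 → (pos i).1 < (pos j).1 → i < j
  junk : ∀ i, i ∉ Finset.Icc 1 μ.card → pos i = 0

/-- `des(T)` : the set of `i ∈ {1, …, n−1}` such that `i+1` lies in a strictly
higher row of `T` than `i` (in matrix convention: a strictly larger row index). -/
def desSYT {μ : YoungDiagram} (T : SYT μ) : Finset ℕ :=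
  (Finset.Icc 1 (μ.card - 1)).filter (fun i => (T.pos i).1 < (T.pos (i+1)).1)

/-- the ordinary descent set `des(π) = {i : π_i > π_{i+1}}` (1-indexed). -/
def desPerm {n : ℕ} (π : Equiv.Perm (Fin n)) : Finset ℕ :=
  (Finset.Icc 1 (n-1)).filter (fun i => pget π (i+1) < pget π i)

/-- `comaj(π) = ∑_{i ∈ des(π)} (n − i)`. -/
def comajP {n : ℕ} (π : Equiv.Perm (Fin n)) : ℕ :=
  ∑ i ∈ desPerm π, (n - i)


/-- the filling of the Young diagram `μ` placing the sequence `Z i` in the cell of `T`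
containing `i` (and `0` outside `μ`). -/
def fillOf {μ : YoungDiagram} (k : ℕ) (T : SYT μ) (Z : ℕ → Seq k) : ℕ × ℕ → Seq k :=
  fun c => if h : ∃ i, i ∈ Finset.Icc 1 μ.card ∧ T.pos i = c then Z h.choose else 0

/-- the exponent of the monomial `q^P` of a filling `P` of `μ` by sequences in `ℕ^k`. -/
def expFill (μ : YoungDiagram) {k : ℕ} (P : ℕ × ℕ → Seq k) : Fin k →₀ ℕ :=
  Finsupp.equivFunOnFinite.symm (fun i => ∑ c ∈ μ.cells, P c (Fin.rev i))

/-! ### generating functions -/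

lemma gf_congr {σ α β : Type*} {P : α → (σ →₀ ℕ) → Prop} {Q : β → (σ →₀ ℕ) → Prop}
    (h : ∀ d, Nat.card {a // P a d} = Nat.card {b // Q b d}) :
    countSeriesP P = countSeriesP Q := by
  funext d
  simp only [countSeriesP, h]

lemma gf_equiv {σ α β : Type*} (e : α ≃ β) (w : α → (σ →₀ ℕ)) (w' : β → (σ →₀ ℕ))
    (h : ∀ a, w' (e a) = w a) :
    countSeriesP (fun a d => w a = d) = countSeriesP (fun b d => w' b = d) := by
  apply gf_congr
  intro d
  exact Nat.card_congr (e.subtypeEquiv (fun a => by rw [h]))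

lemma fin_step {σ B : Type*} (w : B → (σ →₀ ℕ)) (hB : ∀ d, {b | w b = d}.Finite)
    (v : σ →₀ ℕ) (hv : v ≠ 0) (d : σ →₀ ℕ) : {x : B × ℕ | w x.1 + x.2 • v = d}.Finite := by
  obtain ⟨i, hi⟩ : ∃ i, v i ≠ 0 := by
    by_contra! h
    exact hv (Finsupp.ext h)
  have h1 : ((Finset.Iic d : Finset (σ →₀ ℕ)) : Set (σ →₀ ℕ)).Finite := Finset.finite_toSet _
  have h2 : (⋃ e ∈ ((Finset.Iic d : Finset (σ →₀ ℕ)) : Set (σ →₀ ℕ)), {b | w b = e}).Finite :=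
    h1.biUnion (fun e _ => hB e)
  refine (h2.prod (Set.finite_Iic (d i))).subset ?_
  rintro ⟨b, m⟩ h
  simp only [Set.mem_ofPred_eq] at h
  refine ⟨?_, ?_⟩
  · simp only [Set.mem_iUnion, Set.mem_ofPred_eq]
    refine ⟨w b, ?_, rfl⟩
    simp only [Finset.coe_Iic, Set.mem_Iic]
    rw [← h]; exact le_self_add
  · simp only [Set.mem_Iic]
    have := DFunLike.congr_fun h i
    simp at this
    nlinarith [Nat.pos_of_ne_zero hi]

lemma gf_step {σ B : Type*} (w : B → (σ →₀ ℕ)) (hB : ∀ d, {b | w b = d}.Finite)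
    (v : σ →₀ ℕ) (hv : v ≠ 0) :
    (1 - MvPowerSeries.monomial v (1 : ℤ)) *
      countSeriesP (fun (x : B × ℕ) d => w x.1 + x.2 • v = d) =
    countSeriesP (fun b d => w b = d) := by
  have hfin := fin_step w hB v hv
  ext d
  rw [sub_mul, one_mul, map_sub, MvPowerSeries.coeff_monomial_mul]
  simp only [MvPowerSeries.coeff_apply, countSeriesP, one_mul]
  have e1 : Nat.card {x : B × ℕ // w x.1 + x.2 • v = d} =
      Nat.card {b // w b = d} + Nat.card {x : B × ℕ // w x.1 + (x.2 + 1) • v = d} := by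
    have f1 : Finite {b // w b = d} := hB d
    have f2 : Finite {x : B × ℕ // w x.1 + (x.2 + 1) • v = d} := by
      have f3 : Finite {x : B × ℕ // w x.1 + x.2 • v = d} := hfin d
      refine Finite.of_injective (fun x : {x : B × ℕ // w x.1 + (x.2 + 1) • v = d} =>
        (⟨(x.1.1, x.1.2 + 1), x.2⟩ : {x : B × ℕ // w x.1 + x.2 • v = d})) ?_
      rintro ⟨⟨a, b⟩, h⟩ ⟨⟨a', b'⟩, h'⟩ h
      simpa using h
    rw [← Nat.card_sum]
    refine (Nat.card_eq_of_bijective (fun y : {b // w b = d} ⊕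
        {x : B × ℕ // w x.1 + (x.2 + 1) • v = d} => (Sum.elim (fun b => ⟨(b.1, 0), by simp [b.2]⟩)
        (fun x => ⟨(x.1.1, x.1.2 + 1), x.2⟩) y : {x : B × ℕ // w x.1 + x.2 • v = d})) ⟨?_, ?_⟩).symm
    · rintro (⟨a, h⟩ | ⟨⟨a, b⟩, h⟩) (⟨a', h'⟩ | ⟨⟨a', b'⟩, h'⟩) hh <;> simp_all
    · rintro ⟨⟨a, _ | b⟩, h⟩
      · exact ⟨Sum.inl ⟨a, by simpa using h⟩, rfl⟩
      · exact ⟨Sum.inr ⟨(a, b), h⟩, rfl⟩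
  have e2 : (if v ≤ d then (Nat.card {x : B × ℕ // w x.1 + x.2 • v = d - v} : ℤ) else 0) =
      Nat.card {x : B × ℕ // w x.1 + (x.2 + 1) • v = d} := by
    split_ifs with h
    · congr 1
      apply Nat.card_congr
      apply Equiv.subtypeEquivRight
      intro x
      rw [add_smul, one_smul, ← add_assoc]
      exact eq_tsub_iff_add_eq_of_le h
    · symm
      rw [Nat.cast_eq_zero]
      have : IsEmpty {x : B × ℕ // w x.1 + (x.2 + 1) • v = d} := by
        refine ⟨fun x => h ?_⟩
        rw [← x.2, add_smul, one_smul, ← add_assoc]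
        exact le_add_self
      exact Nat.card_of_isEmpty
  rw [e2, e1]
  push_cast
  ring

lemma gf_prod {σ : Type*} (ι : Type) [Fintype ι] : ∀ {B : Type} (w : B → (σ →₀ ℕ))
    (_ : ∀ d, {b | w b = d}.Finite) (v : ι → (σ →₀ ℕ)) (_ : ∀ i, v i ≠ 0),
    (∏ i, (1 - MvPowerSeries.monomial (v i) (1 : ℤ))) *
      countSeriesP (fun (x : B × (ι → ℕ)) d => w x.1 + ∑ i, x.2 i • v i = d) =
    countSeriesP (fun b d => w b = d) := by
  refine Fintype.induction_empty_option (P := fun (ι : Type) [Fintype ι] => ∀ {B : Type}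
    (w : B → (σ →₀ ℕ))
    (_ : ∀ d, {b | w b = d}.Finite) (v : ι → (σ →₀ ℕ)) (_ : ∀ i, v i ≠ 0),
    (∏ i, (1 - MvPowerSeries.monomial (v i) (1 : ℤ))) *
      countSeriesP (fun (x : B × (ι → ℕ)) d => w x.1 + ∑ i, x.2 i • v i = d) =
    countSeriesP (fun b d => w b = d)) ?_ ?_ ?_ ι
  · intro α β _ e ih B w hB v hv
    let _ := Fintype.ofEquiv β e.symm
    have := ih w hB (v ∘ e) (fun i => hv _)
    rw [← this, ← e.prod_comp]
    congr 1
    refine gf_equiv ((Equiv.refl B).prodCongr (e.arrowCongr (Equiv.refl ℕ)).symm) _ _ ?_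
    rintro ⟨b, m⟩
    simp [← e.sum_comp, Equiv.arrowCongr]
  · intro B w hB v hv
    simp only [Finset.univ_eq_empty, Finset.prod_empty, one_mul, Finset.sum_empty, add_zero]
    exact gf_equiv (Equiv.prodUnique B (PEmpty → ℕ)) _ _ (fun a => rfl)
  · intro α _ ih B w hB v hv
    rw [Fintype.prod_option]
    have h1 := ih (B := B × ℕ) (fun x => w x.1 + x.2 • v none) (fin_step w hB _ (hv _))
      (fun i => v (some i)) (fun i => hv _)
    rw [← gf_step w hB (v none) (hv none), ← h1, mul_assoc]
    congr 2
    refine gf_equiv (((Equiv.refl B).prodCongr (Equiv.piOptionEquivProd)).trans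
      (Equiv.prodAssoc B ℕ (α → ℕ)).symm) _ _ ?_
    rintro ⟨b, m⟩
    simp [Fintype.sum_option, Equiv.piOptionEquivProd, add_assoc]

/-! ### the reading order as a linear order -/

def cls (R : Finset ℕ) (a : ℕ) : ℕ := ((Finset.range a).filter (fun t => t ∉ R)).card

lemma cls_split (R : Finset ℕ) {a b : ℕ} (h : a ≤ b) :
    cls R b = cls R a + ((Finset.Ico a b).filter (fun t => t ∉ R)).card := by
  unfold cls
  rw [← Finset.card_union_of_disjoint, ← Finset.filter_union]
  · congr 2
    ext t; simp; omega
  · rw [Finset.disjoint_left]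
    intro t; simp; omega

lemma cls_mono (R : Finset ℕ) {a b : ℕ} (h : a ≤ b) : cls R a ≤ cls R b := by
  rw [cls_split R h]; omega

lemma RNbr_iff (R : Finset ℕ) {a b : ℕ} (h : a < b) : RNbr R a b ↔ cls R a = cls R b := by
  rw [cls_split R h.le, RNbr, min_eq_left h.le, max_eq_right h.le]
  rw [left_eq_add, Finset.card_eq_zero, Finset.filter_eq_empty_iff]
  simp

abbrev KK (r : ℕ) := (Lex (Fin r → ℕ)) ×ₗ (ℕ ×ₗ ℕᵒᵈ)

def key {n r : ℕ} (R : Finset ℕ) (S : Fin n → Seq r) (v : Fin n) : KK r :=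
  toLex (toLex (S v), toLex (cls R (v.val + 1), OrderDual.toDual v.val))

lemma key_inj {n r : ℕ} (R : Finset ℕ) (S : Fin n → Seq r) : Function.Injective (key R S) := by
  intro a b h
  have := congrArg (fun x => (ofLex (ofLex x).2).2) h
  exact Fin.ext this

lemma lexLt_iff {r : ℕ} (a b : Seq r) : lexLt a b ↔ toLex a < toLex b := Iff.rfl

lemma lexLe_iff {r : ℕ} (a b : Seq r) : lexLe a b ↔ toLex a ≤ toLex b := by
  rw [le_iff_lt_or_eq]; rfl

lemma key_lt_iff {n r : ℕ} (R : Finset ℕ) (S : Fin n → Seq r) (u v : Fin n) :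
    key R S u < key R S v ↔ toLex (S u) < toLex (S v) ∨
      (S u = S v ∧ (cls R (u.val+1) < cls R (v.val+1) ∨
        (cls R (u.val+1) = cls R (v.val+1) ∧ v.val < u.val))) := by
  unfold key
  rw [Prod.Lex.toLex_lt_toLex, Prod.Lex.toLex_lt_toLex]
  rfl

lemma tie_iff (R : Finset ℕ) (a b : ℕ) :
    ((a < b ∧ ¬ RNbr R a b) ∨ (b < a ∧ RNbr R b a)) ↔
      (cls R a < cls R b ∨ (cls R a = cls R b ∧ b < a)) := by
  rcases lt_trichotomy a b with h | h | h
  · have := cls_mono R h.le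
    rw [RNbr_iff R h]; omega
  · subst h; simp
  · have := cls_mono R h.le
    rw [RNbr_iff R h]; omega

lemma sget_succ {n r : ℕ} (S : Fin n → Seq r) (v : Fin n) : sget S (v.val + 1) = S v := by
  simp [sget]

lemma pget_succ {n : ℕ} (σ : Equiv.Perm (Fin n)) (v : Fin n) :
    pget σ (v.val + 1) = (σ v).val + 1 := by
  simp [pget]

lemma readBefore_iff {n r : ℕ} (R : Finset ℕ) (S : Fin n → Seq r) (u v : Fin n) :
    readBefore R S (u.val+1) (v.val+1) ↔ key R S u < key R S v := by
  rw [readBefore, sget_succ, sget_succ, tie_iff, key_lt_iff, lexLt_iff]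
  simp

lemma desCond_iff {N r : ℕ} (R : Finset ℕ) (S : Fin (N+1) → Seq r)
    (σ : Equiv.Perm (Fin (N+1))) (i : Fin N) :
    desCond R S σ (i.val + 1) ↔ key R S (σ i.succ) < key R S (σ i.castSucc) := by
  have h1 : pget σ (i.val + 1) = (σ i.castSucc).val + 1 := pget_succ σ i.castSucc
  have h2 : pget σ (i.val + 1 + 1) = (σ i.succ).val + 1 := pget_succ σ i.succ
  have hne : (σ i.succ).val ≠ (σ i.castSucc).val := by
    intro h
    have := congrArg Fin.val (σ.injective (Fin.ext h))
    simp at this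
  rw [desCond, h1, h2, sget_succ, sget_succ, key_lt_iff, lexLt_iff, lexLe_iff]
  generalize σ i.succ = u at *
  generalize σ i.castSucc = v at *
  have ht := tie_iff R (u.val+1) (v.val+1)
  split_ifs with h
  · have h' := ht.1 h
    rw [le_iff_lt_or_eq]
    constructor
    · rintro (h | h)
      · exact Or.inl h
      · exact Or.inr ⟨toLex.injective h, by omega⟩
    · rintro (h | h)
      · exact Or.inl h
      · exact Or.inr (congrArg _ h.1)
  · constructor
    · exact Or.inl
    · rintro (h1 | h1)
      · exact h1
      · exact absurd (ht.2 (by omega)) h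

lemma mem_DesSet_iff {N r : ℕ} (R : Finset ℕ) (S : Fin (N+1) → Seq r)
    (σ : Equiv.Perm (Fin (N+1))) (i : Fin N) :
    i.val + 1 ∈ DesSet R S σ ↔ key R S (σ i.succ) < key R S (σ i.castSucc) := by
  rw [DesSet, Finset.mem_filter, desCond_iff]
  simp

lemma IsReading_iff {N r : ℕ} (R : Finset ℕ) (S : Fin (N+1) → Seq r)
    (σ : Equiv.Perm (Fin (N+1))) : IsReading R S σ ↔ StrictMono (key R S ∘ σ) := by
  rw [Fin.strictMono_iff_lt_succ]
  constructor
  · intro h i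
    have h0 := h (i.val + 1) (by simp)
    have h1 : pget σ (i.val + 1) = (σ i.castSucc).val + 1 := pget_succ σ i.castSucc
    have h2 : pget σ (i.val + 1 + 1) = (σ i.succ).val + 1 := pget_succ σ i.succ
    rw [h1, h2] at h0
    exact (readBefore_iff R S _ _).1 h0
  · intro h i hi
    simp at hi
    obtain ⟨j, rfl⟩ : ∃ j, i = j + 1 := ⟨i - 1, by omega⟩
    have hj : j < N := by omega
    have := (readBefore_iff R S _ _).2 (h ⟨j, hj⟩)
    rw [← pget_succ, ← pget_succ] at this
    exact this

lemma strictMono_unique {N : ℕ} {α : Type*} [LinearOrder α] {f : Fin (N+1) → α}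
    (hf : Function.Injective f) {σ τ : Equiv.Perm (Fin (N+1))}
    (h1 : StrictMono (f ∘ σ)) (h2 : StrictMono (f ∘ τ)) : σ = τ := by
  have := (StrictMono.range_inj h1 h2).1 (by simp [Set.range_comp])
  ext i
  exact congrArg _ (hf (congrFun this i))

lemma exists_reading {N r : ℕ} (R : Finset ℕ) (S : Fin (N+1) → Seq r) :
    ∃ σ : Equiv.Perm (Fin (N+1)), StrictMono (key R S ∘ σ) := by
  refine ⟨Tuple.sort (key R S), ?_⟩
  exact (Tuple.monotone_sort (key R S)).strictMono_of_injective
    ((key_inj R S).comp (Equiv.injective _))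

/-- descent set only depends on the reading order -/
lemma DesSet_congr {N r r' : ℕ} (R : Finset ℕ) (S : Fin (N+1) → Seq r) (S' : Fin (N+1) → Seq r')
    (τ σ : Equiv.Perm (Fin (N+1))) (h : StrictMono (key R S ∘ τ)) (h' : StrictMono (key R S' ∘ τ)) :
    DesSet R S σ = DesSet R S' σ := by
  have key1 : ∀ u v, key R S u < key R S v ↔ key R S' u < key R S' v := by
    intro u v
    have a := h.lt_iff_lt (a := τ.symm u) (b := τ.symm v)
    have b := h'.lt_iff_lt (a := τ.symm u) (b := τ.symm v)
    simp at a b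
    rw [a, b]
  ext i
  by_cases hi : 1 ≤ i ∧ i ≤ N
  · obtain ⟨j, rfl⟩ : ∃ j, i = j + 1 := ⟨i - 1, by omega⟩
    have hj : j < N := by omega
    rw [mem_DesSet_iff R S σ ⟨j, hj⟩, mem_DesSet_iff R S' σ ⟨j, hj⟩, key1]
  · simp only [DesSet, Finset.mem_filter, Finset.mem_Icc]
    constructor <;> (rintro ⟨h, _⟩; omega)

/-! ### generalized Z -/

def dcount (D : Finset ℕ) (p : ℕ) : ℕ := (D ∩ Finset.Ico 1 (p + 1)).card

lemma dcount_zero (D : Finset ℕ) : dcount D 0 = 0 := by simp [dcount]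

lemma dcount_succ (D : Finset ℕ) (p : ℕ) :
    dcount D (p+1) = dcount D p + if p + 1 ∈ D then 1 else 0 := by
  unfold dcount
  have : Finset.Ico 1 (p+1+1) = insert (p+1) (Finset.Ico 1 (p+1)) := by
    ext t; simp only [Finset.mem_insert, Finset.mem_Ico]; omega
  rw [this]
  split_ifs with h
  · rw [Finset.inter_insert_of_mem h, Finset.card_insert_of_notMem (by simp)]
  · rw [Finset.inter_insert_of_notMem h]; simp

def psum {n : ℕ} (m : Fin n → ℕ) (p : Fin n) : ℕ := ∑ j ∈ Finset.Iic p, m j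

lemma psum_zero {N : ℕ} (m : Fin (N+1) → ℕ) : psum m 0 = m 0 := by
  unfold psum
  have : Finset.Iic (0 : Fin (N+1)) = {0} := by ext t; simp
  rw [this]; simp

lemma psum_succ {N : ℕ} (m : Fin (N+1) → ℕ) (i : Fin N) :
    psum m i.succ = psum m i.castSucc + m i.succ := by
  unfold psum
  have : Finset.Iic i.succ = insert i.succ (Finset.Iic i.castSucc) := by
    ext t; simp [Fin.le_def, Fin.ext_iff]; omega
  rw [this, Finset.sum_insert (by simp [Fin.le_def]), add_comm]

def Zstep {n r : ℕ} (R : Finset ℕ) (σ : Equiv.Perm (Fin n)) (m : Fin n → ℕ) (S : Fin n → Seq r) :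
    Fin n → Seq (r+1) :=
  fun v => Fin.cons (dcount (DesSet R S σ) (σ.symm v).val + psum m (σ.symm v)) (S v)

def Zgen {n : ℕ} (R : Finset ℕ) (σs : ℕ → Equiv.Perm (Fin n)) (ms : ℕ → Fin n → ℕ) :
    (i : ℕ) → Fin n → Seq i
  | 0 => fun _ => (0 : Seq 0)
  | (i+1) => Zstep R (σs i) (ms i) (Zgen R σs ms i)

lemma cons_lt {r : ℕ} (a b : ℕ) (x y : Seq r) :
    toLex (Fin.cons a x : Seq (r+1)) < toLex (Fin.cons b y : Seq (r+1)) ↔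
      a < b ∨ (a = b ∧ toLex x < toLex y) := by
  rw [← lexLt_iff, ← lexLt_iff]
  constructor
  · rintro ⟨i, h1, h2⟩
    induction i using Fin.cases with
    | zero => left; simpa using h2
    | succ i =>
      right
      refine ⟨by simpa using h1 0 (Fin.succ_pos i), i, fun j hj => ?_, by simpa using h2⟩
      simpa using h1 j.succ (by simpa using hj)
  · rintro (h | ⟨rfl, i, h1, h2⟩)
    · exact ⟨0, fun j hj => absurd hj (by simp), by simpa using h⟩
    · refine ⟨i.succ, fun j hj => ?_, by simpa using h2⟩
      induction j using Fin.cases with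
      | zero => simp
      | succ j => simpa using h1 j (by simpa using hj)

lemma key_cons_lt {n r : ℕ} (R : Finset ℕ) (a : Fin n → ℕ) (S : Fin n → Seq r) (u v : Fin n) :
    key R (fun v => (Fin.cons (a v) (S v) : Seq (r+1))) u <
      key R (fun v => (Fin.cons (a v) (S v) : Seq (r+1))) v ↔
    a u < a v ∨ (a u = a v ∧ key R S u < key R S v) := by
  rw [key_lt_iff, key_lt_iff, cons_lt, Fin.cons_inj]
  tauto

/-- reading permutation of a prepended list -/
lemma reading_cons {N r : ℕ} (R : Finset ℕ) (a : Fin (N+1) → ℕ) (S : Fin (N+1) → Seq r)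
    (σ : Equiv.Perm (Fin (N+1))) :
    StrictMono (key R (fun v => (Fin.cons (a v) (S v) : Seq (r+1))) ∘ σ) ↔
    ∀ i : Fin N, a (σ i.castSucc) + (if i.val + 1 ∈ DesSet R S σ then 1 else 0) ≤
      a (σ i.succ) := by
  rw [Fin.strictMono_iff_lt_succ]
  refine forall_congr' fun i => ?_
  simp only [Function.comp]
  rw [key_cons_lt]
  have hD := mem_DesSet_iff R S σ i
  have hne : key R S (σ i.succ) ≠ key R S (σ i.castSucc) := by
    intro h
    have := congrArg Fin.val (σ.injective (key_inj R S h))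
    simp at this
  split_ifs with h <;> rw [hD] at h
  · have := h.not_gt
    constructor
    · rintro (h | h)
      · omega
      · exact absurd h.2 this
    · intro h; left; omega
  · have : key R S (σ i.castSucc) < key R S (σ i.succ) := lt_of_le_of_ne (not_lt.1 h) hne.symm
    constructor
    · rintro (h | h) <;> omega
    · intro h
      rcases h.lt_or_eq with h | h
      · left; omega
      · right; exact ⟨by omega, this⟩

lemma reading_Zstep {N r : ℕ} (R : Finset ℕ) (σ : Equiv.Perm (Fin (N+1))) (m : Fin (N+1) → ℕ)
    (S : Fin (N+1) → Seq r) : StrictMono (key R (Zstep R σ m S) ∘ σ) := by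
  unfold Zstep
  rw [reading_cons R (fun v => dcount (DesSet R S σ) (σ.symm v).val + psum m (σ.symm v))]
  intro i
  simp only [Equiv.symm_apply_apply, Fin.val_castSucc, Fin.val_succ]
  rw [dcount_succ, psum_succ]
  omega

lemma Zstep_surj {N r : ℕ} (R : Finset ℕ) (S : Fin (N+1) → Seq (r+1)) :
    ∃ σ m, Zstep R σ m (fun v => Fin.tail (S v)) = S := by
  obtain ⟨σ, hσ⟩ := exists_reading R S
  set S' : Fin (N+1) → Seq r := fun v => Fin.tail (S v) with hS'
  have hS : S = fun v => (Fin.cons (S v 0) (S' v) : Seq (r+1)) := by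
    funext v; simp [hS']
  rw [hS, reading_cons R (fun v => S v 0)] at hσ
  refine ⟨σ, Fin.cases (S (σ 0) 0) (fun i => S (σ i.succ) 0 -
    (S (σ i.castSucc) 0 + (if i.val + 1 ∈ DesSet R S' σ then 1 else 0))), ?_⟩
  set m : Fin (N+1) → ℕ := Fin.cases (S (σ 0) 0) (fun i => S (σ i.succ) 0 -
    (S (σ i.castSucc) 0 + (if i.val + 1 ∈ DesSet R S' σ then 1 else 0))) with hm
  have key1 : ∀ p : Fin (N+1), dcount (DesSet R S' σ) p.val + psum m p = S (σ p) 0 := by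
    intro p
    induction p using Fin.induction with
    | zero => simp [dcount_zero, psum_zero, hm]
    | succ i ih =>
      have h1 := hσ i
      have h2 : m i.succ = S (σ i.succ) 0 -
        (S (σ i.castSucc) 0 + (if i.val + 1 ∈ DesSet R S' σ then 1 else 0)) := rfl
      rw [Fin.val_castSucc] at ih
      rw [psum_succ, Fin.val_succ, dcount_succ]
      omega
  conv_rhs => rw [hS]
  funext v
  unfold Zstep
  rw [key1]; simp

lemma Zstep_inj {N r : ℕ} (R : Finset ℕ) {S S' : Fin (N+1) → Seq r} {σ σ' m m'}
    (h : Zstep R σ m S = Zstep R σ' m' S') : S = S' ∧ σ = σ' ∧ m = m' := by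
  have hσ : σ = σ' := by
    refine strictMono_unique (key_inj R _) (reading_Zstep R σ m S) ?_
    rw [h]; exact reading_Zstep R σ' m' S'
  subst hσ
  have h0 : ∀ v, _ ∧ S v = S' v := fun v => Fin.cons_inj.1 (congrFun h v)
  have hS : S = S' := funext fun v => (h0 v).2
  subst hS
  have h1 : ∀ p, psum m p = psum m' p := by
    intro p
    have := (h0 (σ p)).1
    simpa using this
  refine ⟨rfl, rfl, funext fun p => ?_⟩
  induction p using Fin.cases with
  | zero => have := h1 0; rwa [psum_zero, psum_zero] at this
  | succ i =>
    have a := h1 i.succ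
    have b := h1 i.castSucc
    rw [psum_succ, psum_succ] at a
    omega

lemma Zgen_congr {n : ℕ} (R : Finset ℕ) {σs σs' : ℕ → Equiv.Perm (Fin n)}
    {ms ms' : ℕ → Fin n → ℕ} (i : ℕ) (h : ∀ j < i, σs j = σs' j ∧ ms j = ms' j) :
    Zgen R σs ms i = Zgen R σs' ms' i := by
  induction i with
  | zero => rfl
  | succ i ih =>
    rw [Zgen, Zgen, ih (fun j hj => h j (by omega)), (h i (by omega)).1, (h i (by omega)).2]

lemma Zgen_inj {N : ℕ} (R : Finset ℕ) {σs σs' : ℕ → Equiv.Perm (Fin (N+1))}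
    {ms ms' : ℕ → Fin (N+1) → ℕ} (i : ℕ) (h : Zgen R σs ms i = Zgen R σs' ms' i) :
    ∀ j < i, σs j = σs' j ∧ ms j = ms' j := by
  induction i with
  | zero => intro j hj; omega
  | succ i ih =>
    obtain ⟨h1, h2, h3⟩ := Zstep_inj R h
    intro j hj
    rcases Nat.lt_succ_iff_lt_or_eq.1 hj with hj | rfl
    · exact ih h1 j hj
    · exact ⟨h2, h3⟩

lemma Zgen_surj {N : ℕ} (R : Finset ℕ) (i : ℕ) (S : Fin (N+1) → Seq i) :
    ∃ σs ms, Zgen R σs ms i = S := by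
  induction i with
  | zero => exact ⟨fun _ => 1, fun _ _ => 0, funext fun v => funext fun j => j.elim0⟩
  | succ i ih =>
    obtain ⟨σs, ms, h⟩ := ih (fun v => Fin.tail (S v))
    obtain ⟨σ, m, h'⟩ := Zstep_surj R S
    refine ⟨Function.update σs i σ, Function.update ms i m, ?_⟩
    rw [Zgen, Function.update_self, Function.update_self, ← h', ← h]
    congr 1
    apply Zgen_congr
    intro j hj
    rw [Function.update_of_ne (by omega), Function.update_of_ne (by omega)]
    exact ⟨rfl, rfl⟩

lemma Zgen_zero {n : ℕ} (R : Finset ℕ) (σs : ℕ → Equiv.Perm (Fin n)) (i : ℕ) :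
    Zgen R σs (fun _ _ => 0) i = Zvec R σs i := by
  induction i with
  | zero => rfl
  | succ i ih =>
    rw [Zgen, Zvec, ih]
    funext v
    simp [Zstep, Zop, dcount, psum]

lemma Zgen_DesSet {N : ℕ} (R : Finset ℕ) (σs : ℕ → Equiv.Perm (Fin (N+1)))
    (ms : ℕ → Fin (N+1) → ℕ) (i : ℕ) (σ) :
    DesSet R (Zgen R σs ms i) σ = DesSet R (Zvec R σs i) σ := by
  cases i with
  | zero => rfl
  | succ i =>
    rw [← Zgen_zero]
    exact DesSet_congr R _ _ (σs i) σ (reading_Zstep _ _ _ _) (reading_Zstep _ _ _ _)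

lemma sum_psum {n : ℕ} (m : Fin n → ℕ) : ∑ p, psum m p = ∑ j, m j * (n - j.val) := by
  unfold psum
  rw [Finset.sum_comm' (t' := Finset.univ) (s' := fun j => Finset.Ici j) (by simp)]
  simp [mul_comm]

/-- total of the coordinates prepended at step `l` -/
lemma Zgen_exp {N : ℕ} (R : Finset ℕ) (σs : ℕ → Equiv.Perm (Fin (N+1)))
    (ms : ℕ → Fin (N+1) → ℕ) (k : ℕ) (l : Fin k) :
    ∑ v, Zgen R σs ms k v l.rev = ∑ v, Zvec R σs k v l.rev +
      ∑ j, ms l.val j * (N + 1 - j.val) := by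
  induction k with
  | zero => exact l.elim0
  | succ k ih =>
    induction l using Fin.lastCases with
    | last =>
      rw [Fin.rev_last]
      have a : ∀ v, Zgen R σs ms (k+1) v 0 =
        Zvec R σs (k+1) v 0 + psum (ms k) ((σs k).symm v) := by
        intro v
        simp [Zgen, Zvec, Zstep, Zop, Zgen_DesSet, dcount]
      simp_rw [a]
      rw [Finset.sum_add_distrib, Equiv.sum_comp (σs k).symm (psum (ms k)), sum_psum]
      simp
    | cast l =>
      rw [Fin.rev_castSucc]
      exact ih l

/-! ### tableaux -/

lemma fillOf_pos {μ : YoungDiagram} (k : ℕ) (T : SYT μ) (Z : ℕ → Seq k) (i : ℕ)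
    (hi : i ∈ Finset.Icc 1 μ.card) : fillOf k T Z (T.pos i) = Z i := by
  have h : ∃ j, j ∈ Finset.Icc 1 μ.card ∧ T.pos j = T.pos i := ⟨i, hi, rfl⟩
  rw [fillOf, dif_pos h]
  rw [T.inj _ h.choose_spec.1 _ hi h.choose_spec.2]

lemma SYT_ext {μ : YoungDiagram} {T T' : SYT μ}
    (h : ∀ i ∈ Finset.Icc 1 μ.card, T.pos i = T'.pos i) : T = T' := by
  have : T.pos = T'.pos := by
    funext i
    by_cases hi : i ∈ Finset.Icc 1 μ.card
    · exact h i hi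
    · rw [T.junk i hi, T'.junk i hi]
  cases T; cases T'; simp_all

instance SYT_finite (μ : YoungDiagram) : Finite (SYT μ) := by
  refine Finite.of_injective (β := Finset.Icc 1 μ.card → μ.cells)
    (fun T i => ⟨T.pos i.1, (YoungDiagram.mem_cells _).2 (T.mem i.1 i.2)⟩) ?_
  intro T T' h
  apply SYT_ext
  intro i hi
  have := congrFun h ⟨i, hi⟩
  simpa using this

def cellKey {k : ℕ} (P : ℕ × ℕ → Seq k) (c : ℕ × ℕ) : Lex (Fin k → ℕ) ×ₗ (ℕᵒᵈ ×ₗ ℕ) :=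
  toLex (toLex (P c), toLex (OrderDual.toDual c.1, c.2))

lemma cellKey_inj {k : ℕ} (P : ℕ × ℕ → Seq k) : Function.Injective (cellKey P) := by
  intro a b h
  have h1 := congrArg (fun x => (ofLex (ofLex x).2).1) h
  have h2 := congrArg (fun x => (ofLex (ofLex x).2).2) h
  exact Prod.ext h1 h2

lemma cellKey_strictMono {N k : ℕ} {μ : YoungDiagram} (hμ : μ.card = N + 1) (T : SYT μ)
    (S : Fin (N+1) → Seq k) (hS : IsReading (desSYT T) S 1) :
    StrictMono (fun i : Fin (N+1) => cellKey (fillOf k T (sget S)) (T.pos (i.val + 1))) := by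
  rw [Fin.strictMono_iff_lt_succ]
  intro i
  have hm1 : i.val + 1 ∈ Finset.Icc 1 μ.card := by rw [Finset.mem_Icc]; omega
  have hm2 : i.val + 1 + 1 ∈ Finset.Icc 1 μ.card := by simp [hμ]
  have h := hS (i.val + 1) (by simp)
  have e1 : pget (1 : Equiv.Perm (Fin (N+1))) (i.val + 1) = i.val + 1 := by
    simpa using pget_succ 1 i.castSucc
  have e2 : pget (1 : Equiv.Perm (Fin (N+1))) (i.val + 1 + 1) = i.val + 1 + 1 := by
    simpa using pget_succ 1 i.succ
  rw [e1, e2] at h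
  simp only [Fin.val_castSucc, Fin.val_succ]
  unfold cellKey
  rw [fillOf_pos k T _ _ hm1, fillOf_pos k T _ _ hm2, Prod.Lex.toLex_lt_toLex,
    Prod.Lex.toLex_lt_toLex]
  rcases h with h | ⟨h, h'⟩
  · left; exact h
  · right
    refine ⟨congrArg toLex h, ?_⟩
    have hnR : i.val + 1 ∉ desSYT T := by
      intro hR
      rcases h' with h' | h'
      · apply h'.2
        intro t ht
        simp at ht
        have : t = i.val + 1 := by omega
        rwa [this]
      · omega
    have hrow : (T.pos (i.val + 1 + 1)).1 ≤ (T.pos (i.val + 1)).1 := by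
      by_contra hlt
      apply hnR
      rw [desSYT, Finset.mem_filter]
      refine ⟨by simp [hμ], by omega⟩
    rcases hrow.lt_or_eq with hr | hr
    · left; exact hr
    · right
      refine ⟨congrArg OrderDual.toDual hr.symm, ?_⟩
      by_contra hc
      rcases (not_lt.1 hc).lt_or_eq with hc | hc
      · have := T.row_inc _ hm2 _ hm1 hr hc
        omega
      · have := T.inj _ hm2 _ hm1 (Prod.ext hr hc)
        omega

lemma fill_inj {N k : ℕ} {μ : YoungDiagram} (hμ : μ.card = N + 1) {T T' : SYT μ}
    {S S' : Fin (N+1) → Seq k} (hS : IsReading (desSYT T) S 1) (hS' : IsReading (desSYT T') S' 1)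
    (h : fillOf k T (sget S) = fillOf k T' (sget S')) : T = T' ∧ S = S' := by
  have h1 := cellKey_strictMono hμ T S hS
  have h2 := cellKey_strictMono hμ T' S' hS'
  rw [← h] at h2
  have hr : ∀ T : SYT μ, Set.range (fun i : Fin (N+1) => T.pos (i.val + 1)) = {c | c ∈ μ} := by
    intro T
    ext c
    constructor
    · rintro ⟨i, rfl⟩
      exact T.mem _ (by simp [hμ]; omega)
    · intro hc
      obtain ⟨i, hi, rfl⟩ := T.surj c hc
      simp [hμ] at hi
      exact ⟨⟨i - 1, by omega⟩, by simp; congr 1; omega⟩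
  have h3 := (StrictMono.range_inj h1 h2).1 (by
    have := congrArg (fun s => (cellKey (fillOf k T (sget S))) '' s) ((hr T).trans (hr T').symm)
    simp only [← Set.range_comp] at this
    exact this)
  have hT : T = T' := by
    apply SYT_ext
    intro i hi
    simp [hμ] at hi
    have := cellKey_inj _ (congrFun h3 ⟨i - 1, by omega⟩)
    simp only [Nat.sub_add_cancel hi.1] at this
    exact this
  subst hT
  refine ⟨rfl, funext fun v => ?_⟩
  have hv : v.val + 1 ∈ Finset.Icc 1 μ.card := by simp [hμ]; omega
  have := congrFun h (T.pos (v.val + 1))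
  rwa [fillOf_pos k T _ _ hv, fillOf_pos k T _ _ hv, sget_succ, sget_succ] at this

lemma expFill_fillOf {N k : ℕ} {μ : YoungDiagram} (hμ : μ.card = N + 1) (T : SYT μ)
    (S : Fin (N+1) → Seq k) : expFill μ (fillOf k T (sget S)) = expOf S := by
  unfold expFill expOf
  congr 1
  funext i
  symm
  refine Finset.sum_bij (fun v _ => T.pos (v.val + 1)) ?_ ?_ ?_ ?_
  · intro v _
    exact (YoungDiagram.mem_cells _).2 (T.mem _ (by simp [hμ]; omega))
  · intro u _ v _ h
    have := T.inj _ (by simp [hμ]; omega) _ (by simp [hμ]; omega) h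
    exact Fin.ext (by omega)
  · intro c hc
    obtain ⟨i, hi, rfl⟩ := T.surj c ((YoungDiagram.mem_cells _).1 hc)
    simp [hμ] at hi
    exact ⟨⟨i - 1, by omega⟩, Finset.mem_univ _, by simp; congr 1; omega⟩
  · intro v _
    rw [fillOf_pos k T _ _ (by simp [hμ]; omega), sget_succ]

/-! ### assembly -/

def extM {n k : ℕ} (m : Fin k × Fin n → ℕ) (l : ℕ) (j : Fin n) : ℕ :=
  if h : l < k then m (⟨l, h⟩, j) else 0

def vv (k n : ℕ) (x : Fin k × Fin n) : Fin k →₀ ℕ := Finsupp.single x.1 (n - x.2.val)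

lemma poch_eq (n k : ℕ) : pochAll n k =
    ∏ x : Fin k × Fin n, (1 - MvPowerSeries.monomial (vv k n x) (1 : ℤ)) := by
  rw [Fintype.prod_prod_type]
  unfold pochAll
  refine Finset.prod_congr rfl fun i _ => ?_
  unfold pochOne
  symm
  refine Finset.prod_bij (fun j _ => n - j.val) ?_ ?_ ?_ ?_
  · intro j _; simp; omega
  · intro a _ b _ h
    exact Fin.ext (by omega)
  · intro b hb
    simp at hb
    exact ⟨⟨n - b, by omega⟩, Finset.mem_univ _, by simp; omega⟩
  · intro j _
    rw [MvPowerSeries.X_pow_eq]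
    rfl

lemma extFun_last {n k : ℕ} (σv : Fin k → Equiv.Perm (Fin n)) :
    extFun σv k = 1 := by simp [extFun]

lemma reading_gen {N k : ℕ} (R : Finset ℕ) (σv : Fin k → Equiv.Perm (Fin (N+1))) (ms) :
    IsReading R (Zgen R (extFun σv) ms (k+1)) 1 := by
  rw [IsReading_iff]
  have := reading_Zstep R (extFun σv k) (ms k) (Zgen R (extFun σv) ms k)
  rw [extFun_last σv] at this
  rw [Zgen, extFun_last]
  exact this

lemma extFun_inj {n k : ℕ} {σv σv' : Fin k → Equiv.Perm (Fin n)}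
    (h : ∀ j < k + 1, extFun σv j = extFun σv' j) : σv = σv' := by
  funext j
  have := h j.val (by omega)
  simpa [extFun] using this

lemma expOf_gen {N k : ℕ} (R : Finset ℕ) (σs) (m : Fin k × Fin (N+1) → ℕ) :
    expOf (Zgen R σs (extM m) k) = expOf (Zvec R σs k) + ∑ x, m x • vv k (N+1) x := by
  ext l
  have h := Zgen_exp R σs (extM m) k l
  rw [Fintype.sum_prod_type]
  simp only [expOf, Finsupp.add_apply, Finsupp.equivFunOnFinite_symm_apply_apply, h,
    Finsupp.finsetSum_apply, Finsupp.smul_apply, vv, smul_eq_mul]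
  congr 1
  rw [Finset.sum_eq_single l]
  · simp [extM]
  · intro b _ hb
    simp [hb]
  · simp

theorem tableaux_sum (n k : ℕ) (hn : 1 ≤ n) (hk : 1 ≤ k)
    (μ : YoungDiagram) (hμ : μ.card = n) :
    pochAll n k *
      countSeriesP (α := SYT μ × (Fin n → Seq k))
        (fun TS d => IsReading (desSYT TS.1) TS.2 1 ∧ expOf TS.2 = d) =
    countSeriesP
      (α := {P : ℕ × ℕ → Seq k // ∃ (T : SYT μ) (σv : Fin (k-1) → Equiv.Perm (Fin n)),
        P = fillOf k T (sget (Zvec (desSYT T) (extFun σv) k))})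
      (fun P d => expFill μ P.val = d) := by
  obtain ⟨N, rfl⟩ : ∃ N, n = N + 1 := ⟨n - 1, by omega⟩
  obtain ⟨k, rfl⟩ : ∃ k', k = k' + 1 := ⟨k - 1, by omega⟩
  set w : SYT μ × (Fin k → Equiv.Perm (Fin (N+1))) → (Fin (k+1) →₀ ℕ) :=
    fun b => expOf (Zvec (desSYT b.1) (extFun b.2) (k+1)) with hw
  have hread : ∀ b : SYT μ × (Fin k → Equiv.Perm (Fin (N+1))),
      IsReading (desSYT b.1) (Zvec (desSYT b.1) (extFun b.2) (k+1)) 1 := by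
    intro b
    rw [← Zgen_zero]
    exact reading_gen _ _ _
  have hR : countSeriesP (fun b d => w b = d) = countSeriesP
      (α := {P : ℕ × ℕ → Seq (k+1) // ∃ (T : SYT μ) (σv : Fin k → Equiv.Perm (Fin (N+1))),
        P = fillOf (k+1) T (sget (Zvec (desSYT T) (extFun σv) (k+1)))})
      (fun P d => expFill μ P.val = d) := by
    refine gf_equiv (Equiv.ofBijective (fun b => ⟨fillOf (k+1) b.1
      (sget (Zvec (desSYT b.1) (extFun b.2) (k+1))), b.1, b.2, rfl⟩) ⟨?_, ?_⟩) _ _ ?_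
    · rintro ⟨T, σv⟩ ⟨T', σv'⟩ h
      have h := congrArg Subtype.val h
      obtain ⟨h1, h2⟩ := fill_inj hμ (hread (T, σv)) (hread (T', σv')) h
      dsimp only at h1 h2
      subst h1
      rw [← Zgen_zero, ← Zgen_zero] at h2
      have := Zgen_inj _ _ h2
      rw [extFun_inj (fun j hj => (this j hj).1)]
    · rintro ⟨P, T, σv, rfl⟩
      exact ⟨(T, σv), rfl⟩
    · intro b
      exact expFill_fillOf hμ b.1 _
  refine Eq.trans ?_ hR
  rw [poch_eq, ← gf_prod (Fin (k+1) × Fin (N+1)) w (fun d => Set.toFinite _) (vv (k+1) (N+1))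
    (by
      intro x h
      have := DFunLike.congr_fun h x.1
      simp [vv] at this
      omega)]
  congr 1
  apply gf_congr
  intro d
  symm
  refine Nat.card_eq_of_bijective (fun x => (⟨(x.1.1.1, Zgen (desSYT x.1.1.1) (extFun x.1.1.2)
    (extM x.1.2) (k+1)), reading_gen _ _ _, by rw [expOf_gen]; exact x.2⟩ :
      {TS : SYT μ × (Fin (N+1) → Seq (k+1)) //
        IsReading (desSYT TS.1) TS.2 1 ∧ expOf TS.2 = d})) ⟨?_, ?_⟩
  · rintro ⟨⟨⟨T, σv⟩, m⟩, h⟩ ⟨⟨⟨T', σv'⟩, m'⟩, h'⟩ hh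
    have hh := congrArg Subtype.val hh
    obtain ⟨h1, h2⟩ := Prod.mk.inj hh
    dsimp only at h1 h2
    subst h1
    have := Zgen_inj _ _ h2
    have e1 := extFun_inj (fun j hj => (this j hj).1)
    have e2 : m = m' := by
      funext x
      have := congrFun (this x.1.val x.1.isLt).2 x.2
      rwa [extM, extM, dif_pos x.1.isLt, dif_pos x.1.isLt] at this
    subst e1 e2
    rfl
  · rintro ⟨⟨T, S⟩, h1, h2⟩
    obtain ⟨σs, ms, hS⟩ := Zgen_surj (desSYT T) (k+1) S
    dsimp only at h1 h2
    have hlast : σs k = 1 := by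
      refine strictMono_unique (key_inj (desSYT T) S) ?_ ((IsReading_iff _ _ _).1 h1)
      rw [← hS]
      exact reading_Zstep _ _ _ _
    have hS2 : Zgen (desSYT T) (extFun (fun j : Fin k => σs j.val))
        (extM (fun x : Fin (k+1) × Fin (N+1) => ms x.1.val x.2)) (k+1) = S := by
      rw [← hS]
      apply Zgen_congr
      intro j hj
      constructor
      · rcases Nat.lt_succ_iff_lt_or_eq.1 hj with hj | rfl
        · simp [extFun, hj]
        · simp [extFun, hlast]
      · funext p
        simp [extM, hj]
    refine ⟨⟨((T, fun j => σs j.val), fun x => ms x.1.val x.2), ?_⟩, ?_⟩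
    · rw [← h2, ← hS2, expOf_gen]
    · apply Subtype.ext
      exact Prod.ext rfl hS2

end

end RomeroComaj
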